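/- For every a ≥ 1 and every k ≥ 1, the k-th Dirichlet biharmonic eigenvalue of the rectangle R_a satisfies λ_k(a)^{1/2} ≥ 4πk + 2a·λ_k(a)^{1/4} − (4√(2π)/(3√3))·a^{3/2}·λ_k(a)^{1/8}. -/

import Mathlib

open MeasureTheory Real Filter

noncomputable section

/-- Directional (partial) derivative of `u : ℝ × ℝ → ℝ` in direction `v`. -/
def pd (v : ℝ × ℝ) (u : ℝ × ℝ → ℝ) : ℝ × ℝ → ℝ := fun p => fderiv ℝ u p v

/-- Second partial derivative `∂²u/∂x²`. -/
def uxx (u : ℝ × ℝ → ℝ) : ℝ × ℝ → ℝ := pd (1, 0) (pd (1, 0) u)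

/-- Second partial derivative `∂²u/∂y²`. -/
def uyy (u : ℝ × ℝ → ℝ) : ℝ × ℝ → ℝ := pd (0, 1) (pd (0, 1) u)

/-- Mixed second partial derivative `∂²u/∂x∂y`. -/
def uxy (u : ℝ × ℝ → ℝ) : ℝ × ℝ → ℝ := pd (0, 1) (pd (1, 0) u)

/-- The Laplacian `Δu = u_xx + u_yy`. -/
def lap (u : ℝ × ℝ → ℝ) : ℝ × ℝ → ℝ := fun p => uxx u p + uyy u p

/-- The open rectangle `R_a = (0,a) × (0,1/a)` of unit area. -/
def Rect (a : ℝ) : Set (ℝ × ℝ) := Set.Ioo 0 a ×ˢ Set.Ioo 0 (1 / a)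

/-- Admissible test functions: smooth, compactly supported inside `Ω`. -/
def Adm (Ω : Set (ℝ × ℝ)) (u : ℝ × ℝ → ℝ) : Prop :=
  ContDiff ℝ (⊤ : ℕ∞) u ∧ HasCompactSupport u ∧ tsupport u ⊆ Ω

/-- First Dirichlet eigenvalue of the biharmonic operator on `R_a`,
characterized variationally as the infimum of the Rayleigh quotient. -/
def lam1 (a : ℝ) : ℝ :=
  sInf { μ | ∃ u : ℝ × ℝ → ℝ, Adm (Rect a) u ∧ u ≠ 0 ∧
    μ = (∫ p, (lap u p) ^ 2) / (∫ p, (u p) ^ 2) }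

/-- `k`-th Dirichlet eigenvalue of the biharmonic operator on `R_a`:
infimum over linearly independent `k`-tuples of admissible functions of the
maximum of the Rayleigh quotient over nonzero linear combinations. -/
def lamk (k : ℕ) (a : ℝ) : ℝ :=
  sInf { μ | ∃ u : Fin k → (ℝ × ℝ → ℝ), (∀ i, Adm (Rect a) (u i)) ∧
    LinearIndependent ℝ u ∧
    μ = sSup { r | ∃ c : Fin k → ℝ, c ≠ 0 ∧
      r = (∫ p, (lap (fun q => ∑ i, c i * u i q) p) ^ 2) /
          (∫ p, (∑ i, c i * u i p) ^ 2) } }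


theorem hasSum_sq_sine_coeff {L : ℝ} (hL : 0 < L) {f : ℝ → ℝ} (hf : Continuous f)
    (hs : ∀ x, x ∉ Set.Ioo 0 L → f x = 0) :
    HasSum (fun n : ℕ => 2 / L * (∫ x, f x * sin (n * (π / L) * x)) ^ 2) (∫ x, f x ^ 2) := by
  have hint : ∀ g : ℝ → ℂ, Continuous g → Integrable (fun x => (f x : ℂ) * g x) := by
    intro g hg
    refine Continuous.integrable_of_hasCompactSupport (by fun_prop)
      (HasCompactSupport.intro (isCompact_Icc (a := 0) (b := L)) fun x hx => ?_)
    rw [hs x fun h => hx (Set.Ioo_subset_Icc_self h)]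
    simp
  have hsq : Integrable (fun x => f x ^ 2) := by
    refine Continuous.integrable_of_hasCompactSupport (by fun_prop)
      (HasCompactSupport.intro (isCompact_Icc (a := 0) (b := L)) fun x hx => ?_)
    rw [hs x fun h => hx (Set.Ioo_subset_Icc_self h)]
    simp
  have hfneg : ∀ x, f x * f (-x) = 0 := by
    intro x
    rcases le_total x 0 with h | h
    · rw [hs x fun h' => absurd h'.1 (not_lt.2 h), zero_mul]
    · rw [hs (-x) fun h' => by have := h'.1; linarith, mul_zero]
  have hout : ∀ x, x ∉ Set.Ioc (-L) L → f x = 0 ∧ f (-x) = 0 := by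
    intro x hx
    refine ⟨hs x fun h => hx ⟨by linarith [h.1], h.2.le⟩, hs (-x) fun h => hx ⟨?_, ?_⟩⟩
    · linarith [h.2]
    · linarith [h.1]
  let F : ℝ → ℂ := fun x => (f x : ℂ) - (f (-x) : ℂ)
  have hF : Continuous F := by fun_prop
  have hab : -L < L := by linarith
  have hmem : MemLp F 2 (volume.restrict (Set.Ioc (-L) L)) := by
    refine MemLp.mono_measure (Measure.restrict_le_self) (hF.memLp_of_hasCompactSupport
      (HasCompactSupport.intro (isCompact_Icc (a := -L) (b := L)) fun x hx => ?_))
    obtain ⟨h1, h2⟩ := hout x fun h => hx (Set.Ioc_subset_Icc_self h)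
    simp [F, h1, h2]
  have key := hasSum_sq_fourierCoeffOn hab hmem
  have hcoef : ∀ n : ℤ, ‖fourierCoeffOn hab F n‖ ^ 2
      = 1 / L ^ 2 * (∫ x, f x * sin (n * (π / L) * x)) ^ 2 := by
    intro n
    rw [fourierCoeffOn_eq_integral, intervalIntegral.integral_of_le hab.le,
      setIntegral_eq_integral_of_forall_compl_eq_zero]
    swap
    · intro x hx
      obtain ⟨h1, h2⟩ := hout x hx
      simp [F, h1, h2]
    let e : ℝ → ℂ := fun x => Complex.exp (-(Complex.I * ((n * (π / L) * x : ℝ) : ℂ)))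
    have he : Continuous e := by fun_prop
    have h1 : ∀ x : ℝ, (fourier (-n) (x : AddCircle (L - -L)) : ℂ) • F x
        = (f x : ℂ) * e x - (f (-x) : ℂ) * e (- -x) := by
      intro x
      rw [fourier_coe_apply]
      have : Complex.exp (2 * π * Complex.I * (-n : ℤ) * x / ((L - -L : ℝ) : ℂ)) = e x := by
        simp only [e]
        congr 1
        have : (L : ℂ) ≠ 0 := by exact_mod_cast hL.ne'
        push_cast
        rw [show (L : ℂ) - -L = 2 * L by ring]
        field_simp
      rw [this, neg_neg]
      simp only [F, smul_eq_mul]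
      ring
    simp_rw [h1]
    have hn : Integrable (fun x => (f x : ℂ) * e (-x)) := hint (fun x => e (-x)) (by fun_prop)
    have hn' : Integrable (fun x => (f (-x) : ℂ) * e (- -x)) := hn.comp_neg
    rw [integral_sub (hint e he) hn']
    have h2 : ∫ x, (f (-x) : ℂ) * e (- -x) = ∫ x, (f x : ℂ) * e (-x) := by
      rw [← integral_neg_eq_self]
      simp
    rw [h2, ← integral_sub (hint e he) hn]
    have h3 : ∀ x : ℝ, (f x : ℂ) * e x - (f x : ℂ) * e (-x)
        = (-2 * Complex.I) * ((f x * sin (n * (π / L) * x) : ℝ) : ℂ) := by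
      intro x
      simp only [e]
      push_cast
      rw [Complex.sin, show -(Complex.I * (n * (π / L) * -x)) = n * (π / L) * x * Complex.I by ring,
        show -(Complex.I * ((n : ℂ) * (π / L) * x)) = -(n * (π / L) * x) * Complex.I by ring]
      linear_combination ((f x : ℂ) * (Complex.exp (-(n * (π / L) * x) * Complex.I)
        - Complex.exp (n * (π / L) * x * Complex.I))) * Complex.I_sq
    simp_rw [h3]
    rw [integral_const_mul, integral_complex_ofReal, norm_smul, norm_mul]
    simp only [Complex.norm_real, norm_mul, norm_neg, Complex.norm_I, Complex.norm_ofNat,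
      Real.norm_eq_abs, mul_pow, sq_abs]
    field_simp
    ring
  have hval : (L - -L)⁻¹ • ∫ x in (-L)..L, ‖F x‖ ^ 2 = 1 / L * ∫ x, f x ^ 2 := by
    rw [intervalIntegral.integral_of_le hab.le, setIntegral_eq_integral_of_forall_compl_eq_zero]
    swap
    · intro x hx
      obtain ⟨h1, h2⟩ := hout x hx
      simp [F, h1, h2]
    have h1 : ∀ x, ‖F x‖ ^ 2 = f x ^ 2 + f (-x) ^ 2 := by
      intro x
      simp only [F]
      rw [← Complex.ofReal_sub, Complex.norm_real, Real.norm_eq_abs, sq_abs]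
      linear_combination -2 * hfneg x
    simp_rw [h1]
    rw [integral_add hsq hsq.comp_neg, integral_neg_eq_self (fun x => f x ^ 2), smul_eq_mul]
    field_simp
    ring
  rw [hval] at key
  simp_rw [hcoef] at key
  have k2 := key.nat_add_neg.mul_left L
  have hneg : ∀ n : ℕ, ∫ x, f x * sin (((-(n : ℤ) : ℤ) : ℝ) * (π / L) * x)
      = -∫ x, f x * sin (n * (π / L) * x) := by
    intro n
    rw [← integral_neg]
    congr 1
    funext x
    push_cast
    rw [← mul_neg, ← sin_neg]
    ring_nf
  have hterm : (fun n : ℕ => 2 / L * (∫ x, f x * sin (n * (π / L) * x)) ^ 2)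
      = fun n : ℕ => L * (1 / L ^ 2 * (∫ x, f x * sin (((n : ℤ) : ℝ) * (π / L) * x)) ^ 2
        + 1 / L ^ 2 * (∫ x, f x * sin (((-(n : ℤ) : ℤ) : ℝ) * (π / L) * x)) ^ 2) := by
    funext n
    rw [hneg, Int.cast_natCast]
    field_simp
    ring
  have hsum : L * ((1 / L * ∫ x, f x ^ 2)
      + 1 / L ^ 2 * (∫ x, f x * sin (((0 : ℤ) : ℝ) * (π / L) * x)) ^ 2) = ∫ x, f x ^ 2 := by
    simp only [Int.cast_zero, zero_mul, sin_zero, mul_zero, integral_zero]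
    field_simp
    ring
  rw [hterm, ← hsum]
  exact k2

/-- The unnormalised sine mode with indices `p` on the rectangle `(0,L) × (0,M)`. -/
def sineMode (L M : ℝ) (p : ℕ × ℕ) (q : ℝ × ℝ) : ℝ :=
  sin (p.1 * (π / L) * q.1) * sin (p.2 * (π / M) * q.2)

theorem contDiff_sineMode (L M : ℝ) (p : ℕ × ℕ) :
    ContDiff ℝ (⊤ : ℕ∞) (sineMode L M p) := by
  unfold sineMode
  fun_prop

theorem continuous_integral_of_eq_zero {L : ℝ} {h : ℝ × ℝ → ℝ} (hh : Continuous h)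
    (hs : ∀ x y, x ∉ Set.Icc 0 L → h (x, y) = 0) : Continuous fun y => ∫ x, h (x, y) := by
  have : (fun y => ∫ x, h (x, y)) = fun y => ∫ x in Set.Icc 0 L, h (x, y) := by
    funext y
    rw [setIntegral_eq_integral_of_forall_compl_eq_zero fun x hx => hs x y hx]
  rw [this]
  exact continuous_parametric_integral_of_continuous (f := fun y x => h (x, y))
    (by unfold Function.uncurry; fun_prop) isCompact_Icc

/-- Parseval's identity for the double sine series on a rectangle. -/
theorem tsum_sq_sineMode_coeff {L M : ℝ} (hL : 0 < L) (hM : 0 < M) {g : ℝ × ℝ → ℝ}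
    (hg : Continuous g) (hs : ∀ q, q ∉ Set.Ioo 0 L ×ˢ Set.Ioo 0 M → g q = 0) :
    ∑' p : ℕ × ℕ, ENNReal.ofReal (4 / (L * M) * (∫ q, g q * sineMode L M p q) ^ 2)
      = ENNReal.ofReal (∫ q, g q ^ 2) := by
  have hcomp : ∀ φ : ℝ × ℝ → ℝ, Continuous φ → Integrable (fun q => g q * φ q) := by
    intro φ hφ
    refine Continuous.integrable_of_hasCompactSupport (by fun_prop)
      (HasCompactSupport.intro (isCompact_Icc.prod isCompact_Icc
        (s := Set.Icc 0 L) (t := Set.Icc 0 M)) fun q hq => ?_)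
    rw [hs q fun h => hq (Set.prod_mono Set.Ioo_subset_Icc_self Set.Ioo_subset_Icc_self h),
      zero_mul]
  have hx : ∀ x y, x ∉ Set.Ioo 0 L → g (x, y) = 0 := fun x y h => hs _ fun h' => h h'.1
  have hy : ∀ x y, y ∉ Set.Ioo 0 M → g (x, y) = 0 := fun x y h => hs _ fun h' => h h'.2
  have hsq : Integrable (fun q => g q ^ 2) := by
    simpa only [sq] using hcomp g hg
  let b : ℕ → ℝ → ℝ := fun m y => ∫ x, g (x, y) * sin (m * (π / L) * x)
  have hb : ∀ m, Continuous (b m) := by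
    intro m
    refine continuous_integral_of_eq_zero (L := L)
      (h := fun q => g q * sin (m * (π / L) * q.1)) (by fun_prop) fun x y h => ?_
    rw [hx x y fun h' => h (Set.Ioo_subset_Icc_self h'), zero_mul]
  have hb0 : ∀ m y, y ∉ Set.Ioo 0 M → b m y = 0 := by
    intro m y h
    simp [b, hy _ y h]
  have hbi : ∀ m, Integrable (fun y => b m y ^ 2) := by
    intro m
    refine Continuous.integrable_of_hasCompactSupport ((hb m).pow 2)
      (HasCompactSupport.intro (isCompact_Icc (a := 0) (b := M)) fun y h => ?_)
    rw [hb0 m y fun h' => h (Set.Ioo_subset_Icc_self h')]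
    simp
  have hcoef : ∀ p : ℕ × ℕ, ∫ q, g q * sineMode L M p q
      = ∫ y, b p.1 y * sin (p.2 * (π / M) * y) := by
    intro p
    rw [Measure.volume_eq_prod, integral_prod_symm]
    · congr 1
      funext y
      rw [← integral_mul_const]
      congr 1
      funext x
      simp only [sineMode]
      ring
    · exact hcomp _ (contDiff_sineMode L M p).continuous
  have hrow : ∀ m, ∑' n : ℕ, ENNReal.ofReal (4 / (L * M) * (∫ q, g q * sineMode L M (m, n) q) ^ 2)
      = ENNReal.ofReal (∫ y, 2 / L * b m y ^ 2) := by
    intro m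
    have h := (hasSum_sq_sine_coeff hM (hb m) (hb0 m)).mul_left (2 / L)
    rw [integral_const_mul, ← h.tsum_eq, ENNReal.ofReal_tsum_of_nonneg _ h.summable]
    · congr 1
      funext n
      rw [hcoef]
      congr 1
      field_simp
      ring
    · intro n
      positivity
  have hcol : ∀ y, ∑' m : ℕ, ENNReal.ofReal (2 / L * b m y ^ 2)
      = ENNReal.ofReal (∫ x, g (x, y) ^ 2) := by
    intro y
    have h := hasSum_sq_sine_coeff hL (f := fun x => g (x, y)) (by fun_prop) fun x => hx x y
    rw [← h.tsum_eq, ENNReal.ofReal_tsum_of_nonneg _ h.summable]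
    intro n
    positivity
  rw [ENNReal.tsum_prod']
  simp_rw [hrow]
  rw [ofReal_integral_eq_lintegral_ofReal hsq (ae_of_all _ fun q => sq_nonneg _),
    Measure.volume_eq_prod, lintegral_prod_symm' _ (by fun_prop)]
  have hinner : ∀ y, ∫⁻ x, ENNReal.ofReal (g (x, y) ^ 2)
      = ∑' m : ℕ, ENNReal.ofReal (2 / L * b m y ^ 2) := by
    intro y
    rw [hcol, ofReal_integral_eq_lintegral_ofReal _ (ae_of_all _ fun q => sq_nonneg _)]
    refine Continuous.integrable_of_hasCompactSupport (by fun_prop)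
      (HasCompactSupport.intro (isCompact_Icc (a := 0) (b := L)) fun x h => ?_)
    rw [hx x y fun h' => h (Set.Ioo_subset_Icc_self h')]
    simp
  simp_rw [hinner]
  rw [lintegral_tsum fun m => by have := hb m; fun_prop]
  congr 1
  funext m
  rw [ofReal_integral_eq_lintegral_ofReal ((hbi m).const_mul _)
    (ae_of_all _ fun y => by positivity)]

theorem contDiff_pd {u : ℝ × ℝ → ℝ} (hu : ContDiff ℝ (⊤ : ℕ∞) u) (v : ℝ × ℝ) :
    ContDiff ℝ (⊤ : ℕ∞) (pd v u) :=
  (hu.fderiv_right (m := (⊤ : ℕ∞)) (by simp)).clm_apply contDiff_const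

theorem hasCompactSupport_pd {u : ℝ × ℝ → ℝ} (hu : HasCompactSupport u) (v : ℝ × ℝ) :
    HasCompactSupport (pd v u) :=
  hu.fderiv_apply ℝ v

theorem tsupport_pd_subset (u : ℝ × ℝ → ℝ) (v : ℝ × ℝ) : tsupport (pd v u) ⊆ tsupport u :=
  tsupport_fderiv_apply_subset ℝ v

theorem pd_sum_mul {ι : Type*} (s : Finset ι) (c : ι → ℝ) {u : ι → ℝ × ℝ → ℝ}
    (hu : ∀ i, ContDiff ℝ (⊤ : ℕ∞) (u i)) (v : ℝ × ℝ) :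
    pd v (fun q => ∑ i ∈ s, c i * u i q) = fun q => ∑ i ∈ s, c i * pd v (u i) q := by
  have hd : ∀ i q, DifferentiableAt ℝ (u i) q := fun i q =>
    ((hu i).differentiable (by simp)).differentiableAt
  funext q
  unfold pd
  rw [fderiv_fun_sum fun i _ => (hd i q).const_mul _]
  simp only [sum_apply]
  refine Finset.sum_congr rfl fun i _ => ?_
  rw [fderiv_const_mul (hd i q)]
  simp

theorem lap_sum_mul {ι : Type*} (s : Finset ι) (c : ι → ℝ) {u : ι → ℝ × ℝ → ℝ}
    (hu : ∀ i, ContDiff ℝ (⊤ : ℕ∞) (u i)) :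
    lap (fun q => ∑ i ∈ s, c i * u i q) = fun q => ∑ i ∈ s, c i * lap (u i) q := by
  funext q
  unfold lap uxx uyy
  rw [pd_sum_mul s c hu, pd_sum_mul s c hu, pd_sum_mul s c fun i => contDiff_pd (hu i) _,
    pd_sum_mul s c fun i => contDiff_pd (hu i) _, ← Finset.sum_add_distrib]
  simp only [mul_add]

theorem contDiff_lap {u : ℝ × ℝ → ℝ} (hu : ContDiff ℝ (⊤ : ℕ∞) u) :
    ContDiff ℝ (⊤ : ℕ∞) (lap u) :=
  (contDiff_pd (contDiff_pd hu _) _).add (contDiff_pd (contDiff_pd hu _) _)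

theorem lap_eq_zero_of_notMem_tsupport {u : ℝ × ℝ → ℝ} {q : ℝ × ℝ} (hq : q ∉ tsupport u) :
    lap u q = 0 := by
  have h : ∀ v, pd v (pd v u) q = 0 := fun v => image_eq_zero_of_notMem_tsupport fun h =>
    hq (tsupport_pd_subset _ v (tsupport_pd_subset _ v h))
  simp [lap, uxx, uyy, h]

theorem integral_pd_mul {w φ : ℝ × ℝ → ℝ} (hw : ContDiff ℝ (⊤ : ℕ∞) w)
    (hc : HasCompactSupport w) (hφ : ContDiff ℝ (⊤ : ℕ∞) φ) (v : ℝ × ℝ) :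
    ∫ q, pd v w q * φ q = -∫ q, w q * pd v φ q := by
  have h := integral_mul_fderiv_eq_neg_fderiv_mul_of_integrable (f := w) (g := φ) (v := v)
    (μ := (volume : Measure (ℝ × ℝ)))
    (((contDiff_pd hw v).continuous.mul hφ.continuous).integrable_of_hasCompactSupport
      (hasCompactSupport_pd hc v).mul_right)
    ((hw.continuous.mul (contDiff_pd hφ v).continuous).integrable_of_hasCompactSupport
      hc.mul_right)
    ((hw.continuous.mul hφ.continuous).integrable_of_hasCompactSupport hc.mul_right)
    (fun x _ => (hw.differentiable (by simp)).differentiableAt)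
    (fun x _ => (hφ.differentiable (by simp)).differentiableAt)
  unfold pd
  rw [h, neg_neg]

/-- Green's identity for a compactly supported function. -/
theorem integral_lap_mul {w φ : ℝ × ℝ → ℝ} (hw : ContDiff ℝ (⊤ : ℕ∞) w)
    (hc : HasCompactSupport w) (hφ : ContDiff ℝ (⊤ : ℕ∞) φ) :
    ∫ q, lap w q * φ q = ∫ q, w q * lap φ q := by
  have h : ∀ v, ∫ q, pd v (pd v w) q * φ q = ∫ q, w q * pd v (pd v φ) q := fun v => by
    rw [integral_pd_mul (contDiff_pd hw v) (hasCompactSupport_pd hc v) hφ,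
      integral_pd_mul hw hc (contDiff_pd hφ v), neg_neg]
  have hi : ∀ v, Integrable (fun q => pd v (pd v w) q * φ q) := fun v =>
    ((contDiff_pd (contDiff_pd hw v) v).continuous.mul
      hφ.continuous).integrable_of_hasCompactSupport
      (hasCompactSupport_pd (hasCompactSupport_pd hc v) v).mul_right
  have hi' : ∀ v, Integrable (fun q => w q * pd v (pd v φ) q) := fun v =>
    (hw.continuous.mul (contDiff_pd (contDiff_pd hφ v) v).continuous).integrable_of_hasCompactSupport
      hc.mul_right
  unfold lap uxx uyy
  simp_rw [add_mul, mul_add]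
  rw [integral_add (hi _) (hi _), integral_add (hi' _) (hi' _), h, h]

theorem lap_sineMode (L M : ℝ) (p : ℕ × ℕ) :
    lap (sineMode L M p)
      = fun q => -((p.1 * (π / L)) ^ 2 + (p.2 * (π / M)) ^ 2) * sineMode L M p q := by
  have hx : ∀ f f' : ℝ → ℝ, ∀ g : ℝ → ℝ, (∀ t, HasDerivAt f (f' t) t) → Differentiable ℝ g →
      pd (1, 0) (fun q => f q.1 * g q.2) = fun q => f' q.1 * g q.2 := by
    intro f f' g hf hg
    funext q
    have h1 : HasFDerivAt (fun q : ℝ × ℝ => f q.1) _ q :=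
      (hf q.1).hasFDerivAt.comp q hasFDerivAt_fst
    have h2 : HasFDerivAt (fun q : ℝ × ℝ => g q.2) _ q :=
      (hg q.2).hasDerivAt.hasFDerivAt.comp q hasFDerivAt_snd
    unfold pd
    rw [(h1.fun_mul h2).fderiv]
    simp
    ring
  have hy : ∀ f g g' : ℝ → ℝ, (∀ t, HasDerivAt g (g' t) t) → Differentiable ℝ f →
      pd (0, 1) (fun q => f q.1 * g q.2) = fun q => f q.1 * g' q.2 := by
    intro f g g' hg hf
    funext q
    have h1 : HasFDerivAt (fun q : ℝ × ℝ => f q.1) _ q :=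
      (hf q.1).hasDerivAt.hasFDerivAt.comp q hasFDerivAt_fst
    have h2 : HasFDerivAt (fun q : ℝ × ℝ => g q.2) _ q :=
      (hg q.2).hasFDerivAt.comp q hasFDerivAt_snd
    unfold pd
    rw [(h1.fun_mul h2).fderiv]
    simp
  have hsin : ∀ c t : ℝ, HasDerivAt (fun t => sin (c * t)) (cos (c * t) * c) t := fun c t => by
    simpa using ((hasDerivAt_id t).const_mul c).sin
  have hcos : ∀ c t : ℝ, HasDerivAt (fun t => cos (c * t) * c) (-sin (c * t) * c * c) t :=
    fun c t => by simpa using (((hasDerivAt_id t).const_mul c).cos).mul_const c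
  have hxx : uxx (sineMode L M p) = _ :=
    (congrArg (pd (1, 0)) (hx _ _ (fun t => sin (p.2 * (π / M) * t)) (hsin (p.1 * (π / L)))
      (by fun_prop))).trans
      (hx _ _ (fun t => sin (p.2 * (π / M) * t)) (hcos (p.1 * (π / L))) (by fun_prop))
  have hyy : uyy (sineMode L M p) = _ :=
    (congrArg (pd (0, 1)) (hy (fun t => sin (p.1 * (π / L) * t)) _ _ (hsin (p.2 * (π / M)))
      (by fun_prop))).trans
      (hy (fun t => sin (p.1 * (π / L) * t)) _ _ (hcos (p.2 * (π / M))) (by fun_prop))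
  funext q
  unfold lap
  rw [hxx, hyy]
  simp only [sineMode]
  ring

theorem concaveOn_sqrt_sq_sub_sq {R : ℝ} (hR : 0 ≤ R) :
    ConcaveOn ℝ (Set.Icc 0 R) fun x => √(R ^ 2 - x ^ 2) := by
  refine ⟨convex_Icc _ _, fun x hx y hy s t hs ht hst => ?_⟩
  have hx' : 0 ≤ R ^ 2 - x ^ 2 := by nlinarith [hx.1, hx.2]
  have hy' : 0 ≤ R ^ 2 - y ^ 2 := by nlinarith [hy.1, hy.2]
  simp only [smul_eq_mul]
  apply Real.le_sqrt_of_sq_le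
  obtain rfl : s = 1 - t := by linarith
  nlinarith [Real.sq_sqrt hx', Real.sq_sqrt hy', mul_nonneg (mul_nonneg hs ht)
    (add_nonneg (sq_nonneg (x - y)) (sq_nonneg (√(R ^ 2 - x ^ 2) - √(R ^ 2 - y ^ 2))))]

/-- The trapezoidal rule underestimates the integral of a concave function. -/
theorem trapezoid_le_integral_of_concaveOn {f : ℝ → ℝ} {p q : ℝ} (hpq : p ≤ q)
    (hf : ConcaveOn ℝ (Set.Icc p q) f) (hc : Continuous f) :
    (q - p) * (f p + f q) / 2 ≤ ∫ x in p..q, f x := by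
  have h1 : ∫ x in p..q, f x = (q - p) * ∫ t in (0 : ℝ)..1, f (p + (q - p) * t) := by
    rw [intervalIntegral.mul_integral_comp_add_mul]
    simp
  have h2 : ∫ t in (0 : ℝ)..1, (f p + t * (f q - f p)) = (f p + f q) / 2 := by
    rw [intervalIntegral.integral_add (Continuous.intervalIntegrable (by fun_prop) _ _)
      (Continuous.intervalIntegrable (by fun_prop) _ _)]
    simp
    ring
  rw [h1, mul_div_assoc, ← h2]
  refine mul_le_mul_of_nonneg_left ?_ (sub_nonneg.2 hpq)
  refine intervalIntegral.integral_mono_on zero_le_one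
    (Continuous.intervalIntegrable (by fun_prop) _ _)
    (Continuous.intervalIntegrable (by fun_prop) _ _) fun t ht => ?_
  have := hf.2 (Set.left_mem_Icc.2 hpq) (Set.right_mem_Icc.2 hpq)
    (sub_nonneg.2 ht.2) ht.1 (by ring)
  simp only [smul_eq_mul] at this
  rw [show (1 - t) * p + t * q = p + (q - p) * t by ring] at this
  linarith

theorem integral_sqrt_sq_sub_sq {R : ℝ} (hR : 0 ≤ R) :
    ∫ x in (0 : ℝ)..R, √(R ^ 2 - x ^ 2) = π * R ^ 2 / 4 := by
  have h1 : ∫ x in (0 : ℝ)..1, √(1 - x ^ 2) = π / 4 := by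
    have h := integral_sqrt_one_sub_sq
    have hi : ∀ c d : ℝ, IntervalIntegrable (fun x : ℝ => √(1 - x ^ 2)) volume c d :=
      fun c d => Continuous.intervalIntegrable (by fun_prop) _ _
    rw [← intervalIntegral.integral_add_adjacent_intervals (hi (-1) 0) (hi 0 1)] at h
    have hs : ∫ x in (-1 : ℝ)..0, √(1 - x ^ 2) = ∫ x in (0 : ℝ)..1, √(1 - x ^ 2) := by
      have := intervalIntegral.integral_comp_neg (a := -1) (b := 0) fun x : ℝ => √(1 - x ^ 2)
      simpa using this
    linarith
  have h2 := intervalIntegral.mul_integral_comp_mul_left (a := 0) (b := 1)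
    (f := fun x => √(R ^ 2 - x ^ 2)) R
  simp only [mul_zero, mul_one] at h2
  rw [← h2]
  have : ∀ x : ℝ, √(R ^ 2 - (R * x) ^ 2) = R * √(1 - x ^ 2) := by
    intro x
    rw [show R ^ 2 - (R * x) ^ 2 = R ^ 2 * (1 - x ^ 2) by ring, Real.sqrt_mul (sq_nonneg R),
      Real.sqrt_sq hR]
  simp_rw [this]
  rw [intervalIntegral.integral_const_mul, h1]
  ring

/-- `(1 - θ) √θ` is maximal on `[0,1]` at `θ = 1 / 3`. -/
theorem one_sub_mul_sqrt_le {θ : ℝ} (h0 : 0 ≤ θ) : (1 - θ) * √θ ≤ 2 / (3 * √3) := by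
  have h3 : (√3) ^ 2 = 3 := Real.sq_sqrt (by norm_num)
  have h3' : 0 < √3 := by positivity
  obtain ⟨z, hz, rfl⟩ : ∃ z, 0 ≤ z ∧ θ = z ^ 2 := ⟨√θ, by positivity, (Real.sq_sqrt h0).symm⟩
  rw [Real.sqrt_sq hz, le_div_iff₀ (by positivity)]
  have h := mul_nonneg (add_nonneg (mul_nonneg h3'.le hz) zero_le_two) (sq_nonneg (√3 * z - 1))
  have e : (√3 * z + 2) * (√3 * z - 1) ^ 2 = √3 ^ 2 * √3 * z ^ 3 - 3 * √3 * z + 2 := by ring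
  rw [e, h3] at h
  linarith

/-- Bound for the sum of the chord lengths of a quarter disc at positive integer heights. -/
theorem sum_sqrt_sq_sub_sq_le {R : ℝ} (hR : 0 ≤ R) :
    ∑ n ∈ Finset.Icc 1 ⌊R⌋₊, √(R ^ 2 - (n : ℝ) ^ 2)
      ≤ π * R ^ 2 / 4 - R / 2 + √2 / (3 * √3) * √R := by
  set f : ℝ → ℝ := fun x => √(R ^ 2 - x ^ 2) with hf
  have hfc : Continuous f := by fun_prop
  have hi : ∀ c d : ℝ, IntervalIntegrable f volume c d := fun c d => hfc.intervalIntegrable _ _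
  have hN : (⌊R⌋₊ : ℝ) ≤ R := Nat.floor_le hR
  have hN' : R < ⌊R⌋₊ + 1 := Nat.lt_floor_add_one R
  have htrap : ∀ p q : ℝ, 0 ≤ p → p ≤ q → q ≤ R → (q - p) * (f p + f q) / 2 ≤ ∫ x in p..q, f x :=
    fun p q hp hpq hq => trapezoid_le_integral_of_concaveOn hpq
      ((concaveOn_sqrt_sq_sub_sq hR).subset (Set.Icc_subset_Icc hp hq) (convex_Icc _ _)) hfc
  have hf0 : f 0 = R := by simp [hf, Real.sqrt_sq hR]
  have hfR : f R = 0 := by simp [hf]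
  have hsum : ∀ N : ℕ, (N : ℝ) ≤ R →
      ∑ n ∈ Finset.Icc 1 N, f n ≤ (∫ x in (0 : ℝ)..N, f x) + f N / 2 - R / 2 := by
    intro N
    induction N with
    | zero => simp [hf0]
    | succ N ih =>
      intro h
      push_cast at h ⊢
      rw [Finset.sum_Icc_succ_top (by omega), ← intervalIntegral.integral_add_adjacent_intervals
        (hi 0 N) (hi N (N + 1))]
      have h1 := htrap N (N + 1) (by positivity) (by linarith) h
      have h2 := ih (by linarith)
      push_cast
      linarith
  have h1 := hsum _ hN
  have h2 := htrap _ _ (by positivity) hN le_rfl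
  have h3 := intervalIntegral.integral_add_adjacent_intervals (hi 0 ⌊R⌋₊) (hi ⌊R⌋₊ R)
  rw [show ∫ x in (0 : ℝ)..R, f x = π * R ^ 2 / 4 from integral_sqrt_sq_sub_sq hR] at h3
  rw [hfR, add_zero] at h2
  set N : ℝ := (⌊R⌋₊ : ℝ) with hNdef
  have hN0 : 0 ≤ N := by positivity
  have hfN : f N ≤ √(R - N) * (√2 * √R) := by
    rw [← Real.sqrt_mul (by norm_num), ← Real.sqrt_mul (by linarith)]
    exact Real.sqrt_le_sqrt (by nlinarith)
  have h4 : (1 - (R - N)) / 2 * f N ≤ √2 / (3 * √3) * √R := by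
    calc (1 - (R - N)) / 2 * f N ≤ (1 - (R - N)) / 2 * (√(R - N) * (√2 * √R)) :=
          mul_le_mul_of_nonneg_left hfN (by linarith)
      _ = ((1 - (R - N)) * √(R - N)) * (√2 * √R / 2) := by ring
      _ ≤ 2 / (3 * √3) * (√2 * √R / 2) :=
          mul_le_mul_of_nonneg_right (one_sub_mul_sqrt_le (by linarith)) (by positivity)
      _ = √2 / (3 * √3) * √R := by ring
  nlinarith

theorem Adm.sum_mul {Ω : Set (ℝ × ℝ)} {ι : Type*} (s : Finset ι) (c : ι → ℝ)
    {u : ι → ℝ × ℝ → ℝ} (hu : ∀ i, Adm Ω (u i)) : Adm Ω fun q => ∑ i ∈ s, c i * u i q := by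
  have hsub : tsupport (fun q => ∑ i ∈ s, c i * u i q) ⊆ ⋃ i ∈ s, tsupport (u i) := by
    refine closure_minimal (fun q hq => ?_)
      (s.finite_toSet.isClosed_biUnion fun i _ => isClosed_tsupport _)
    obtain ⟨i, hi, h⟩ := Finset.exists_ne_zero_of_sum_ne_zero hq
    exact Set.mem_biUnion hi (subset_tsupport _ (right_ne_zero_of_mul h))
  refine ⟨ContDiff.sum fun i _ => contDiff_const.mul (hu i).1, ?_,
    hsub.trans (Set.iUnion₂_subset fun i _ => (hu i).2.2)⟩
  exact IsCompact.of_isClosed_subset (s.isCompact_biUnion fun i _ => (hu i).2.1)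
    (isClosed_tsupport _) hsub

theorem Adm.integral_sq_pos {Ω : Set (ℝ × ℝ)} {w : ℝ × ℝ → ℝ} (hw : Adm Ω w) (h0 : w ≠ 0) :
    0 < ∫ q, w q ^ 2 := by
  obtain ⟨q, hq⟩ := Function.ne_iff.1 h0
  refine Continuous.integral_pos_of_hasCompactSupport_nonneg_nonzero (x := q)
    (hw.1.continuous.pow 2) ?_ (fun x => sq_nonneg _) (pow_ne_zero 2 hq)
  simp only [sq]
  exact hw.2.1.mul_right

/-- A nonzero admissible function whose sine coefficients vanish at all modes with Laplace
eigenvalue at most `s` has biharmonic Rayleigh quotient larger than `s ^ 2`. -/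
theorem sq_mul_integral_sq_lt_integral_lap_sq {a s : ℝ} (ha : 0 < a) (hs : 0 ≤ s)
    {w : ℝ × ℝ → ℝ} (hw : Adm (Rect a) w) (h0 : w ≠ 0)
    (hcoef : ∀ m n : ℕ, 1 ≤ m → 1 ≤ n → (m * (π / a)) ^ 2 + (n * (π / (1 / a))) ^ 2 ≤ s →
      ∫ q, w q * sineMode a (1 / a) (m, n) q = 0) :
    s ^ 2 * ∫ q, w q ^ 2 < ∫ q, lap w q ^ 2 := by
  have ha' : 0 < 1 / a := by positivity
  have hpos := hw.integral_sq_pos h0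
  set β : ℕ × ℕ → ℝ := fun p => ∫ q, w q * sineMode a (1 / a) p q with hβ
  set μ : ℕ × ℕ → ℝ := fun p => (p.1 * (π / a)) ^ 2 + (p.2 * (π / (1 / a))) ^ 2 with hμ
  have hP := tsum_sq_sineMode_coeff ha ha' hw.1.continuous
    fun q hq => image_eq_zero_of_notMem_tsupport fun h => hq (hw.2.2 h)
  have hQ := tsum_sq_sineMode_coeff ha ha' (contDiff_lap hw.1).continuous
    fun q hq => lap_eq_zero_of_notMem_tsupport fun h => hq (hw.2.2 h)
  have hlap : ∀ p, ∫ q, lap w q * sineMode a (1 / a) p q = -(μ p * β p) := by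
    intro p
    rw [integral_lap_mul hw.1 hw.2.1 (contDiff_sineMode _ _ _), lap_sineMode, hβ,
      ← integral_const_mul, ← integral_neg]
    congr 1
    funext q
    simp only [hμ]
    ring
  have hbig : ∀ p, β p ≠ 0 → s < μ p := by
    intro p hp
    by_contra! hle
    rcases Nat.eq_zero_or_pos p.1 with h1 | h1
    · exact hp (by simp [hβ, sineMode, h1])
    rcases Nat.eq_zero_or_pos p.2 with h2 | h2
    · exact hp (by simp [hβ, sineMode, h2])
    exact hp (hcoef p.1 p.2 h1 h2 hle)
  have hex : ∃ p, β p ≠ 0 := by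
    by_contra! h
    have hz : ∀ p, ∫ q, w q * sineMode a (1 / a) p q = 0 := h
    simp only [hz] at hP
    simp at hP
    linarith
  obtain ⟨p₀, hp₀⟩ := hex
  have hP' : ∑' p, ENNReal.ofReal (s ^ 2 * (4 / (a * (1 / a)) * β p ^ 2))
      = ENNReal.ofReal (s ^ 2 * ∫ q, w q ^ 2) := by
    simp_rw [ENNReal.ofReal_mul (sq_nonneg s)]
    rw [ENNReal.tsum_mul_left, hP]
  have hle : ∀ p, s ^ 2 * (4 / (a * (1 / a)) * β p ^ 2)
      ≤ 4 / (a * (1 / a)) * (∫ q, lap w q * sineMode a (1 / a) p q) ^ 2 := by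
    intro p
    rw [hlap]
    by_cases hp : β p = 0
    · simp [hp]
    · have h1 : s ^ 2 ≤ μ p ^ 2 := pow_le_pow_left₀ hs (hbig p hp).le 2
      have h2 : 0 ≤ 4 / (a * (1 / a)) * β p ^ 2 := by positivity
      nlinarith [mul_le_mul_of_nonneg_right h1 h2]
  have hlt : s ^ 2 * (4 / (a * (1 / a)) * β p₀ ^ 2)
      < 4 / (a * (1 / a)) * (∫ q, lap w q * sineMode a (1 / a) p₀ q) ^ 2 := by
    rw [hlap]
    have h1 : s ^ 2 < μ p₀ ^ 2 := pow_lt_pow_left₀ (hbig p₀ hp₀) hs two_ne_zero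
    have h2 : 0 < 4 / (a * (1 / a)) * β p₀ ^ 2 := by positivity
    nlinarith [mul_lt_mul_of_pos_right h1 h2]
  have hfin := ENNReal.hasSum_lt (i := p₀) (fun p => ENNReal.ofReal_le_ofReal (hle p))
    ((ENNReal.ofReal_lt_ofReal_iff_of_nonneg (by positivity)).2 hlt)
    (by rw [hP']; exact ENNReal.ofReal_ne_top)
    (ENNReal.summable.hasSum) (ENNReal.summable.hasSum)
  rw [hP', hQ] at hfin
  exact (ENNReal.ofReal_lt_ofReal_iff_of_nonneg (by positivity)).1 hfin

/-- Indices `⟨n, m⟩` of the sine modes on `Rect a` with Laplace eigenvalue at most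
`(a * π * R) ^ 2`. -/
def lowModes (a R : ℝ) : Finset (Σ _ : ℕ, ℕ) :=
  (Finset.Icc 1 ⌊R⌋₊).sigma fun n => Finset.Icc 1 ⌊a ^ 2 * √(R ^ 2 - (n : ℝ) ^ 2)⌋₊

theorem mem_lowModes {a R : ℝ} (ha : 0 < a) (hR : 0 ≤ R) {m n : ℕ} (hm : 1 ≤ m) (hn : 1 ≤ n)
    (h : (m * (π / a)) ^ 2 + (n * (π / (1 / a))) ^ 2 ≤ (a * π * R) ^ 2) :
    (⟨n, m⟩ : Σ _ : ℕ, ℕ) ∈ lowModes a R := by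
  have hπ := Real.pi_pos
  have h1 : (m : ℝ) ^ 2 ≤ (a ^ 2) ^ 2 * (R ^ 2 - (n : ℝ) ^ 2) := by
    have e : (m * (π / a)) ^ 2 + (n * (π / (1 / a))) ^ 2
        = (π / a) ^ 2 * ((m : ℝ) ^ 2 + (a ^ 2) ^ 2 * (n : ℝ) ^ 2) := by
      field_simp
    have e' : (a * π * R) ^ 2 = (π / a) ^ 2 * ((a ^ 2) ^ 2 * R ^ 2) := by
      field_simp
    rw [e, e'] at h
    have := le_of_mul_le_mul_left h (by positivity)
    linarith
  have h2 : 0 ≤ R ^ 2 - (n : ℝ) ^ 2 := by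
    by_contra! hneg
    nlinarith [mul_pos (pow_pos (pow_pos ha 2) 2) (neg_pos.2 hneg), sq_nonneg (m : ℝ)]
  simp only [lowModes, Finset.mem_sigma, Finset.mem_Icc]
  refine ⟨⟨hn, Nat.le_floor ?_⟩, hm, Nat.le_floor ?_⟩
  · exact le_of_sq_le_sq (by linarith) hR
  · refine le_of_sq_le_sq ?_ (by positivity)
    rwa [mul_pow, Real.sq_sqrt h2]

theorem card_lowModes_le {a R : ℝ} (hR : 0 ≤ R) :
    ((lowModes a R).card : ℝ)
      ≤ a ^ 2 * (π * R ^ 2 / 4 - R / 2 + √2 / (3 * √3) * √R) := by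
  rw [lowModes, Finset.card_sigma]
  push_cast
  calc ∑ n ∈ Finset.Icc 1 ⌊R⌋₊,
        ((Finset.Icc 1 ⌊a ^ 2 * √(R ^ 2 - (n : ℝ) ^ 2)⌋₊).card : ℝ)
      ≤ ∑ n ∈ Finset.Icc 1 ⌊R⌋₊, a ^ 2 * √(R ^ 2 - (n : ℝ) ^ 2) := by
        refine Finset.sum_le_sum fun n _ => ?_
        rw [Nat.card_Icc, Nat.add_sub_cancel]
        exact Nat.floor_le (by positivity)
    _ ≤ _ := by
        rw [← Finset.mul_sum]
        exact mul_le_mul_of_nonneg_left (sum_sqrt_sq_sub_sq_le hR) (sq_nonneg a)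

theorem sum_mul_ne_zero {k : ℕ} {u : Fin k → ℝ × ℝ → ℝ} (hli : LinearIndependent ℝ u)
    {c : Fin k → ℝ} (hc : c ≠ 0) : (fun q => ∑ i, c i * u i q) ≠ 0 := by
  intro h
  refine hc (funext (Fintype.linearIndependent_iff.1 hli c ?_))
  rw [← h]
  funext q
  simp

/-- The Rayleigh quotients on the span of a linearly independent admissible tuple are bounded. -/
theorem bddAbove_rayleigh {Ω : Set (ℝ × ℝ)} {k : ℕ} {u : Fin k → ℝ × ℝ → ℝ}
    (hu : ∀ i, Adm Ω (u i)) (hli : LinearIndependent ℝ u) :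
    BddAbove { r | ∃ c : Fin k → ℝ, c ≠ 0 ∧
      r = (∫ p, (lap (fun q => ∑ i, c i * u i q) p) ^ 2) /
          (∫ p, (∑ i, c i * u i p) ^ 2) } := by
  have hcont : ∀ v : Fin k → ℝ × ℝ → ℝ, (∀ i, Continuous (v i)) →
      (∀ i, HasCompactSupport (v i)) →
      Continuous fun c : Fin k → ℝ => ∫ p, (∑ i, c i * v i p) ^ 2 := by
    intro v hv hvc
    have e : (fun c : Fin k → ℝ => ∫ p, (∑ i, c i * v i p) ^ 2)
        = fun c => ∑ i, ∑ j, c i * c j * ∫ p, v i p * v j p := by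
      funext c
      have hint : ∀ i j, Integrable fun p => c i * c j * (v i p * v j p) := fun i j =>
        (((hv i).mul (hv j)).integrable_of_hasCompactSupport (hvc i).mul_right).const_mul _
      simp_rw [← integral_const_mul]
      simp_rw [← integral_finsetSum _ fun j _ => hint _ j]
      rw [← integral_finsetSum _ fun i _ => integrable_finsetSum _ fun j _ => hint i j]
      congr 1
      funext p
      rw [sq, Finset.sum_mul_sum]
      exact Finset.sum_congr rfl fun i _ => Finset.sum_congr rfl fun j _ => by ring
    rw [e]
    fun_prop
  have hcl : ∀ i, HasCompactSupport (lap (u i)) := fun i =>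
    HasCompactSupport.intro (hu i).2.1 fun q hq => lap_eq_zero_of_notMem_tsupport hq
  have hlap : ∀ c : Fin k → ℝ, lap (fun q => ∑ i, c i * u i q)
      = fun q => ∑ i, c i * lap (u i) q := fun c => lap_sum_mul _ c fun i => (hu i).1
  simp_rw [hlap]
  have hE := hcont (fun i => lap (u i)) (fun i => (contDiff_lap (hu i).1).continuous) hcl
  have hD := hcont u (fun i => (hu i).1.continuous) fun i => (hu i).2.1
  have hDpos : ∀ c : Fin k → ℝ, c ≠ 0 → 0 < ∫ p, (∑ i, c i * u i p) ^ 2 := fun c hc =>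
    (Adm.sum_mul Finset.univ c hu).integral_sq_pos (sum_mul_ne_zero hli hc)
  have hquot : ContinuousOn (fun c : Fin k → ℝ => (∫ p, (∑ i, c i * lap (u i) p) ^ 2) /
      (∫ p, (∑ i, c i * u i p) ^ 2)) (Metric.sphere 0 1) :=
    hE.continuousOn.div hD.continuousOn fun c hc =>
      (hDpos c (ne_zero_of_mem_unit_sphere ⟨c, hc⟩)).ne'
  refine ((isCompact_sphere (0 : Fin k → ℝ) 1).bddAbove_image hquot).mono ?_
  rintro _ ⟨c, hc, rfl⟩
  have hn : ‖c‖ ≠ 0 := norm_ne_zero_iff.2 hc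
  refine ⟨‖c‖⁻¹ • c, by simp [norm_smul, hn], ?_⟩
  have hscale : ∀ v : Fin k → ℝ × ℝ → ℝ, ∫ p, (∑ i, (‖c‖⁻¹ • c) i * v i p) ^ 2
      = ‖c‖⁻¹ ^ 2 * ∫ p, (∑ i, c i * v i p) ^ 2 := by
    intro v
    rw [← integral_const_mul]
    congr 1
    funext p
    rw [← mul_pow, Finset.mul_sum]
    simp [mul_assoc]
  simp only [hscale]
  exact mul_div_mul_left _ _ (pow_ne_zero 2 (inv_ne_zero hn))

/-- The maximal Rayleigh quotient of an admissible `k`-tuple dominates the counting function of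
the squared Laplace eigenvalues. -/
theorem le_card_lowModes {a σ : ℝ} (ha : 0 < a) {k : ℕ} {u : Fin k → ℝ × ℝ → ℝ}
    (hu : ∀ i, Adm (Rect a) (u i)) (hli : LinearIndependent ℝ u)
    (hσ : σ = sSup { r | ∃ c : Fin k → ℝ, c ≠ 0 ∧
      r = (∫ p, (lap (fun q => ∑ i, c i * u i q) p) ^ 2) /
          (∫ p, (∑ i, c i * u i p) ^ 2) }) (hσ0 : 0 ≤ σ) :
    k ≤ (lowModes a (√√σ / (a * π))).card := by
  have hπ := Real.pi_pos
  by_contra! hlt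
  set R := √√σ / (a * π) with hR
  have hint : ∀ i p, Integrable fun q => u i q * sineMode a (1 / a) p q := fun i p =>
    ((hu i).1.continuous.mul (contDiff_sineMode a (1 / a) p).continuous).integrable_of_hasCompactSupport
      (hu i).2.1.mul_right
  let T : (Fin k → ℝ) →ₗ[ℝ] (lowModes a R → ℝ) := LinearMap.pi fun p =>
    ∑ i, (∫ q, u i q * sineMode a (1 / a) (p.1.2, p.1.1) q) • LinearMap.proj i
  have hker : LinearMap.ker T ≠ ⊥ := by
    refine T.ker_ne_bot_of_finrank_lt ?_
    simpa using hlt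
  obtain ⟨c, hc, hc0⟩ := (Submodule.ne_bot_iff _).1 hker
  have hw := Adm.sum_mul Finset.univ c hu
  have hw0 := sum_mul_ne_zero hli hc0
  have hgap := sq_mul_integral_sq_lt_integral_lap_sq ha (Real.sqrt_nonneg σ) hw hw0 (by
    intro m n hm hn hle
    have hmem : (⟨n, m⟩ : Σ _ : ℕ, ℕ) ∈ lowModes a R := by
      refine mem_lowModes ha (by positivity) hm hn (hle.trans_eq ?_)
      rw [hR, mul_div_cancel₀ _ (by positivity), Real.sq_sqrt (Real.sqrt_nonneg σ)]
    have h := congrFun (LinearMap.mem_ker.1 hc) ⟨_, hmem⟩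
    simp only [T, LinearMap.pi_apply, LinearMap.sum_apply, LinearMap.smul_apply,
      LinearMap.proj_apply, smul_eq_mul, Pi.zero_apply] at h
    rw [← h]
    simp_rw [Finset.sum_mul]
    rw [integral_finsetSum _ fun i _ => by
      simpa only [mul_assoc] using (hint i (m, n)).const_mul (c i)]
    refine Finset.sum_congr rfl fun i _ => ?_
    simp_rw [mul_assoc]
    rw [integral_const_mul, mul_comm])
  rw [Real.sq_sqrt hσ0, ← lt_div_iff₀ (hw.integral_sq_pos hw0)] at hgap
  refine absurd hgap (not_lt.2 ?_)
  conv_rhs => rw [hσ]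
  exact le_csSup (bddAbove_rayleigh hu hli) ⟨c, hc0, rfl⟩

/-- The rectangle carries arbitrarily long linearly independent admissible tuples. -/
theorem exists_linearIndependent_adm {a : ℝ} (ha : 0 < a) (k : ℕ) :
    ∃ u : Fin k → ℝ × ℝ → ℝ, (∀ i, Adm (Rect a) (u i)) ∧ LinearIndependent ℝ u := by
  set x : Fin k → ℝ × ℝ := fun i => (a * ((i + 1) / (k + 1)), 1 / a / 2) with hx
  have hmem : ∀ i, x i ∈ Rect a := by
    intro i
    have hi : ((i : ℕ) : ℝ) < k := by exact_mod_cast i.2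
    refine ⟨⟨by positivity, ?_⟩, ⟨by positivity, half_lt_self (by positivity)⟩⟩
    exact mul_lt_of_lt_one_right ha ((div_lt_one (by positivity)).2 (by linarith))
  have hopen : IsOpen (Rect a) := isOpen_Ioo.prod isOpen_Ioo
  have hinj : Function.Injective x := by
    intro i j h
    have h1 := congrArg Prod.fst h
    simp only [hx] at h1
    have h2 := mul_left_cancel₀ ha.ne' h1
    rw [div_left_inj' (by positivity)] at h2
    exact Fin.ext (by exact_mod_cast add_right_cancel h2)
  have hbump : ∀ i, ∃ f : ℝ × ℝ → ℝ, Adm (Rect a) f ∧ f (x i) = 1 ∧ ∀ j, j ≠ i → f (x j) = 0 := by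
    intro i
    have hs : Rect a ∩ (x '' {j | j ≠ i})ᶜ ∈ nhds (x i) := by
      refine (hopen.inter (Set.toFinite _).isClosed.isOpen_compl).mem_nhds ⟨hmem i, ?_⟩
      rintro ⟨j, hj, h⟩
      exact hj (hinj h)
    obtain ⟨f, hf1, hf2, hf3, -, hf5⟩ := exists_contDiff_tsupport_subset (n := (⊤ : ℕ∞)) hs
    refine ⟨f, ⟨hf3, hf2, fun q hq => (hf1 hq).1⟩, hf5, fun j hj => ?_⟩
    exact image_eq_zero_of_notMem_tsupport fun h => (hf1 h).2 ⟨j, hj, rfl⟩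
  choose u hu hu1 hu0 using hbump
  refine ⟨u, hu, Fintype.linearIndependent_iff.2 fun c hc i => ?_⟩
  have h := congrFun hc (x i)
  simp only [Finset.sum_apply, Pi.smul_apply, smul_eq_mul, Pi.zero_apply] at h
  rw [Finset.sum_eq_single i (fun j _ hj => by rw [hu0 j i hj.symm, mul_zero]) (by simp),
    hu1, mul_one] at h
  exact h

theorem polya_type_bound_of_le_card {a σ : ℝ} (ha : 0 < a) (hσ : 0 ≤ σ) {k : ℕ}
    (hk : k ≤ (lowModes a (√√σ / (a * π))).card) :
    4 * π * k + 2 * a * σ ^ ((1 : ℝ) / 4)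
        - (4 * √(2 * π) / (3 * √3)) * a ^ ((3 : ℝ) / 2) * σ ^ ((1 : ℝ) / 8)
      ≤ σ ^ ((1 : ℝ) / 2) := by
  have hπ := Real.pi_pos
  set t := σ ^ ((1 : ℝ) / 8) with ht
  have ht0 : 0 ≤ t := by positivity
  have h4 : σ ^ ((1 : ℝ) / 4) = t ^ 2 := by
    rw [ht, ← Real.rpow_natCast, ← Real.rpow_mul hσ]
    norm_num
  have h2 : σ ^ ((1 : ℝ) / 2) = t ^ 4 := by
    rw [ht, ← Real.rpow_natCast, ← Real.rpow_mul hσ]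
    norm_num
  have h3 : a ^ ((3 : ℝ) / 2) = a * √a := by
    rw [Real.sqrt_eq_rpow, ← Real.rpow_one_add' ha.le (by norm_num)]
    norm_num
  have hs : √√σ = t ^ 2 := by
    rw [Real.sqrt_eq_rpow σ, h2, show t ^ 4 = (t ^ 2) ^ 2 by ring, Real.sqrt_sq (by positivity)]
  rw [h4, h2, h3]
  rw [hs] at hk
  have hcard := card_lowModes_le (a := a) (R := t ^ 2 / (a * π)) (by positivity)
  have hk' : (k : ℝ) ≤ _ := (Nat.cast_le.2 hk).trans hcard
  rw [Real.sqrt_div (by positivity), Real.sqrt_sq ht0, Real.sqrt_mul ha.le] at hk'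
  rw [Real.sqrt_mul (by norm_num : (0 : ℝ) ≤ 2)]
  have e : 4 * π * (a ^ 2 * (π * (t ^ 2 / (a * π)) ^ 2 / 4 - t ^ 2 / (a * π) / 2
      + √2 / (3 * √3) * (t / (√a * √π))))
      = t ^ 4 - 2 * a * t ^ 2 + 4 * (√2 * √π) / (3 * √3) * (a * √a) * t := by
    obtain ⟨b, hb, rfl⟩ : ∃ b, 0 < b ∧ a = b ^ 2 :=
      ⟨√a, by positivity, (Real.sq_sqrt ha.le).symm⟩
    obtain ⟨z, hz, hz'⟩ : ∃ z, 0 < z ∧ π = z ^ 2 :=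
      ⟨√π, by positivity, (Real.sq_sqrt hπ.le).symm⟩
    rw [hz', Real.sqrt_sq hb.le, Real.sqrt_sq hz.le]
    field_simp
    ring
  have := mul_le_mul_of_nonneg_left hk' (by positivity : 0 ≤ 4 * π)
  rw [e] at this
  linarith

/-- Improved Pólya-type lower bound:
`λ_k(a)^{1/2} ≥ 4πk + 2a·λ_k(a)^{1/4} − (4√(2π)/(3√3))·a^{3/2}·λ_k(a)^{1/8}`. -/
theorem biharmonic_eigenvalue_polya_type_bound (a : ℝ) (ha : 1 ≤ a)
    (k : ℕ) (hk : 1 ≤ k) :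
    (lamk k a) ^ ((1 : ℝ) / 2) ≥
      4 * π * k + 2 * a * (lamk k a) ^ ((1 : ℝ) / 4)
        - (4 * Real.sqrt (2 * π) / (3 * Real.sqrt 3)) * a ^ ((3 : ℝ) / 2)
            * (lamk k a) ^ ((1 : ℝ) / 8) := by
  have ha0 : 0 < a := by linarith
  set S := { μ | ∃ u : Fin k → (ℝ × ℝ → ℝ), (∀ i, Adm (Rect a) (u i)) ∧
    LinearIndependent ℝ u ∧
    μ = sSup { r | ∃ c : Fin k → ℝ, c ≠ 0 ∧
      r = (∫ p, (lap (fun q => ∑ i, c i * u i q) p) ^ 2) /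
          (∫ p, (∑ i, c i * u i p) ^ 2) } } with hS
  have hnonneg : ∀ σ ∈ S, 0 ≤ σ := by
    rintro _ ⟨u, -, -, rfl⟩
    refine Real.sSup_nonneg ?_
    rintro _ ⟨c, -, rfl⟩
    exact div_nonneg (integral_nonneg fun _ => sq_nonneg _) (integral_nonneg fun _ => sq_nonneg _)
  have hne : S.Nonempty := by
    obtain ⟨u, hu, hli⟩ := exists_linearIndependent_adm ha0 k
    exact ⟨_, u, hu, hli, rfl⟩
  have hclosed : IsClosed { σ : ℝ | 4 * π * k + 2 * a * σ ^ ((1 : ℝ) / 4)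
      - (4 * √(2 * π) / (3 * √3)) * a ^ ((3 : ℝ) / 2) * σ ^ ((1 : ℝ) / 8)
      ≤ σ ^ ((1 : ℝ) / 2) } := by
    have hr : ∀ y : ℝ, 0 ≤ y → Continuous fun σ : ℝ => σ ^ y := fun y hy =>
      Real.continuous_rpow_const hy
    have h2 := hr (1 / 2) (by norm_num)
    have h4 := hr (1 / 4) (by norm_num)
    have h8 := hr (1 / 8) (by norm_num)
    exact isClosed_le (by fun_prop) h2
  refine closure_minimal (fun σ hσ => ?_) hclosed (csInf_mem_closure hne ⟨0, hnonneg⟩)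
  obtain ⟨u, hu, hli, h⟩ := hσ
  exact polya_type_bound_of_le_card ha0 (hnonneg σ ⟨u, hu, hli, h⟩)
    (le_card_lowModes ha0 hu hli h (hnonneg σ ⟨u, hu, hli, h⟩))
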